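/- Let R be a generically Gorenstein local Cohen–Macaulay Noetherian ring of dimension 1 and let R ⊆ S ⊆ Q(R) be a module finite birational extension. Then the following are equivalent: (i) S is a reflexive R-module and the conductor c_R(S) = (R : S) is a stable ideal; (ii) a finitely generated S-module is reflexive over S if and only if it is a torsion-free S-module that is reflexive over R (i.e. refl(S) = CM(S) ∩ refl(R)). -/

import Mathlib

set_option maxHeartbeats 1000000
set_option synthInstance.maxHeartbeats 400000

open CategoryTheory

universe u

/-- The `i`-th Ext module `Ext_A^i(M, N)` over a commutative ring `A`. -/
noncomputable def ExtModule (A : Type u) [CommRing A] (M N : Type u)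
    [AddCommGroup M] [Module A M] [AddCommGroup N] [Module A N] (i : ℕ) : ModuleCat.{u} A :=
  ((Ext A (ModuleCat.{u} A) i).obj (Opposite.op (ModuleCat.of A M))).obj (ModuleCat.of A N)

/-- A module is torsion-free if nonzerodivisors of the ring act injectively. -/
def IsTorsionFreeModule (A : Type*) [CommRing A] (M : Type*) [AddCommGroup M]
    [Module A M] : Prop :=
  ∀ a ∈ nonZeroDivisors A, ∀ m : M, a • m = 0 → m = 0

/-- The grade of an ideal `J`: the length of a maximal regular sequence contained in `J`. -/
noncomputable def Ideal.grade {A : Type*} [CommRing A] (J : Ideal A) : ℕ∞ :=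
  sSup {n : ℕ∞ | ∃ rs : List A, (rs.length : ℕ∞) = n ∧ (∀ r ∈ rs, r ∈ J) ∧
    RingTheory.Sequence.IsWeaklyRegular A rs}

/-- A Cohen–Macaulay local ring: Noetherian local with depth equal to Krull dimension. -/
def IsCohenMacaulayLocalRing (A : Type*) [CommRing A] : Prop :=
  IsNoetherianRing A ∧ ∃ _ : IsLocalRing A,
    ((IsLocalRing.maximalIdeal A).grade : WithBot ℕ∞) = ringKrullDim A

/-- A Cohen–Macaulay ring: Noetherian, all localizations at primes are CM local rings. -/
def IsCohenMacaulayRing (A : Type*) [CommRing A] : Prop :=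
  IsNoetherianRing A ∧ ∀ (p : Ideal A) [p.IsPrime],
    IsCohenMacaulayLocalRing (Localization.AtPrime p)

/-- A Gorenstein local ring: Noetherian local of finite self-injective dimension,
expressed via vanishing of `Ext^{n+1}(A/I, A)` for all ideals `I` (Baer's criterion). -/
def IsGorensteinLocalRing (A : Type u) [CommRing A] : Prop :=
  IsLocalRing A ∧ IsNoetherianRing A ∧
    ∃ n : ℕ, ∀ I : Ideal A, Subsingleton (ExtModule A (A ⧸ I) A (n + 1))

/-- A Gorenstein ring: Noetherian, all localizations at maximal ideals are Gorenstein local. -/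
def IsGorensteinRing (A : Type u) [CommRing A] : Prop :=
  IsNoetherianRing A ∧ ∀ (m : Ideal A) [m.IsMaximal],
    IsGorensteinLocalRing (Localization.AtPrime m)

/-- Generically Gorenstein: the localization at every associated prime is Gorenstein. -/
def IsGenericallyGorenstein (A : Type u) [CommRing A] : Prop :=
  ∀ (p : Ideal A) [p.IsPrime], p ∈ associatedPrimes A A →
    IsGorensteinLocalRing (Localization.AtPrime p)

/-- The trace ideal of a module: the sum of the images of all linear maps to the ring. -/
def traceIdeal (A : Type*) [CommRing A] (M : Type*) [AddCommGroup M] [Module A M] :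
    Ideal A :=
  ⨆ f : M →ₗ[A] A, LinearMap.range f

/-- The image of an ideal inside the total ring of fractions. -/
noncomputable def Ideal.toFrac {A : Type u} [CommRing A] (I : Ideal A) :
    Submodule A (FractionRing A) :=
  Submodule.map (Algebra.linearMap A (FractionRing A)) I

/-- The conductor `(R : S)` of a birational extension `R ⊆ S ⊆ Q(R)`,
as a submodule of the total ring of fractions. -/
noncomputable def conductorFrac (R : Type u) [CommRing R]
    (S : Subalgebra R (FractionRing R)) : Submodule R (FractionRing R) :=
  (1 : Submodule R (FractionRing R)) / Subalgebra.toSubmodule S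

/-- `M ∈ Ω CM(A)`: there is an exact sequence `0 → M → P → N → 0` with `P` a finitely
generated projective `A`-module and `N` a finitely generated torsion-free
(equivalently, over a 1-dimensional CM ring, maximal Cohen–Macaulay) `A`-module. -/
def InSyzygyOfCM (A : Type u) [CommRing A] (M : Type u) [AddCommGroup M] [Module A M] :
    Prop :=
  ∃ (P N : Type u) (_ : AddCommGroup P) (_ : Module A P) (_ : AddCommGroup N)
    (_ : Module A N), Module.Projective A P ∧ Module.Finite A P ∧ Module.Finite A N ∧
      IsTorsionFreeModule A N ∧
      ∃ (f : M →ₗ[A] P) (g : P →ₗ[A] N),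
        Function.Injective f ∧ Function.Surjective g ∧ LinearMap.range f = LinearMap.ker g

section Frobenius

variable {R S : Type*} [CommRing R] [CommRing S] [Algebra R S]

/-- Every `R`-linear functional on an `S`-module factors through a free generator `t` of
`Hom_R(S, R)`. -/
theorem exists_linearMap_comp_eq_of_generator {t : S →ₗ[R] R}
    (ht : ∀ f : S →ₗ[R] R, ∃ s, ∀ x, f x = t (s * x))
    (ht' : ∀ s, (∀ x, t (s * x) = 0) → s = 0)
    {N : Type*} [AddCommGroup N] [Module R N] [Module S N] [IsScalarTower R S N]
    (f : N →ₗ[R] R) : ∃ g : N →ₗ[S] S, ∀ n, f n = t (g n) := by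
  have H (n : N) : ∃ s, ∀ x : S, f (x • n) = t (s * x) :=
    ht (f ∘ₗ ((LinearMap.toSpanSingleton S N n).restrictScalars R))
  choose g hg using H
  have inj (a b : S) (h : ∀ x, t (a * x) = t (b * x)) : a = b :=
    sub_eq_zero.mp (ht' _ fun x ↦ by rw [sub_mul, map_sub, h, sub_self])
  refine ⟨{ toFun := g, map_add' := fun a b ↦ inj _ _ fun x ↦ ?_,
            map_smul' := fun c a ↦ inj _ _ fun x ↦ ?_ }, fun n ↦ ?_⟩
  · rw [← hg, smul_add, map_add, hg, hg, add_mul, map_add]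
  · rw [← hg, smul_smul, hg, RingHom.id_apply, smul_eq_mul]
    congr 1
    ring
  · simpa using hg n 1

/-- If `Hom_R(S, R)` is free of rank one over `S`, an `S`-module is reflexive over `S` iff it is
reflexive over `R`. -/
theorem isReflexive_iff_of_generator {t : S →ₗ[R] R}
    (ht : ∀ f : S →ₗ[R] R, ∃ s, ∀ x, f x = t (s * x))
    (ht' : ∀ s, (∀ x, t (s * x) = 0) → s = 0)
    (M : Type*) [AddCommGroup M] [Module R M] [Module S M] [IsScalarTower R S M] :
    Module.IsReflexive S M ↔ Module.IsReflexive R M := by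
  have inj (a b : S) (h : ∀ x, t (x * a) = t (x * b)) : a = b :=
    sub_eq_zero.mp (ht' _ fun x ↦ by rw [mul_comm, mul_sub, map_sub, h, sub_self])
  let T : Module.Dual S M →ₗ[R] Module.Dual R M :=
    { toFun := fun g ↦ t ∘ₗ g.restrictScalars R
      map_add' := fun a b ↦ by ext; simp
      map_smul' := fun a b ↦ by ext; simp }
  have hT (g : Module.Dual S M) (m : M) : T g m = t (g m) := rfl
  have hTs (f : Module.Dual R M) : ∃ g, T g = f := by
    obtain ⟨g, hg⟩ := exists_linearMap_comp_eq_of_generator ht ht' f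
    exact ⟨g, by ext m; rw [hT, hg]⟩
  have hTi : Function.Injective T := fun g g' h ↦ by
    ext m
    refine inj _ _ fun x ↦ ?_
    rw [← smul_eq_mul, ← smul_eq_mul, ← map_smul, ← map_smul, ← hT, ← hT, h]
  constructor
  · intro h
    refine ⟨fun m m' hm ↦ ?_, fun φ ↦ ?_⟩
    · refine (Module.bijective_dual_eval S M).1 ?_
      ext g
      refine inj _ _ fun x ↦ ?_
      have := LinearMap.congr_fun hm (T (x • g))
      simpa [hT] using this
    · obtain ⟨ψ, hψ⟩ := exists_linearMap_comp_eq_of_generator ht ht' (φ ∘ₗ T)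
      obtain ⟨m, hm⟩ := (Module.bijective_dual_eval S M).2 ψ
      refine ⟨m, ?_⟩
      ext f
      obtain ⟨g, rfl⟩ := hTs f
      have := hψ g
      rw [← hm] at this
      simpa [hT] using this.symm
  · intro h
    refine ⟨fun m m' hm ↦ ?_, fun ψ ↦ ?_⟩
    · refine (Module.bijective_dual_eval R M).1 ?_
      ext f
      obtain ⟨g, rfl⟩ := hTs f
      have := congrArg t (LinearMap.congr_fun hm g)
      simpa [hT] using this
    · let E := LinearEquiv.ofBijective T ⟨hTi, hTs⟩
      obtain ⟨m, hm⟩ := (Module.bijective_dual_eval R M).2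
        (t ∘ₗ (ψ.restrictScalars R) ∘ₗ E.symm.toLinearMap)
      refine ⟨m, ?_⟩
      ext g
      refine inj _ _ fun x ↦ ?_
      have h1 := LinearMap.congr_fun hm (E (x • g))
      rw [LinearMap.comp_apply, LinearMap.comp_apply, LinearEquiv.coe_coe, E.symm_apply_apply,
        LinearMap.restrictScalars_apply, map_smul ψ, smul_eq_mul] at h1
      rw [← h1, ← smul_eq_mul, ← map_smul]
      rfl

end Frobenius

section Fractions

variable {A Q : Type*} [CommRing A] [CommRing Q] [Algebra A Q]

/-- Linear maps between submodules of a localization are given by multiplication. -/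
theorem mul_apply_eq_mul_apply_of_isLocalization (P : Submonoid A) [IsLocalization P Q]
    {I : Submodule A Q} (f : I →ₗ[A] Q) (x y : I) : (x : Q) * f y = y * f x := by
  obtain ⟨⟨p, q⟩, hp⟩ := IsLocalization.surj P (x : Q)
  obtain ⟨⟨p', q'⟩, hp'⟩ := IsLocalization.surj P (y : Q)
  dsimp only at hp hp'
  have key : ((p * q' : A) • y : I) = ((p' * q : A) • x : I) := by
    ext
    simp only [Submodule.coe_smul, Algebra.smul_def, map_mul]
    rw [mul_assoc, mul_comm (algebraMap A Q q'), hp', mul_assoc, mul_comm (algebraMap A Q q), hp,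
      mul_comm]
  have h2 := congrArg f key
  simp only [map_smul, Algebra.smul_def, map_mul, ← hp, ← hp'] at h2
  have hu := (IsLocalization.map_units Q q).mul (IsLocalization.map_units Q q')
  refine hu.mul_left_cancel ?_
  linear_combination h2

/-- A reflexive fractional ideal is divisorial. -/
theorem one_div_one_div_le_of_isReflexive (P : Submonoid A) [IsLocalization P Q]
    (hinj : Function.Injective (algebraMap A Q)) (I : Submodule A Q) [Module.IsReflexive A I]
    {u v : Q} (hu : IsUnit u) (huI : u ∈ I) (hv : IsUnit v) (hvI : v ∈ 1 / I) :
    1 / (1 / I) ≤ I := by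
  intro x hx
  rw [Submodule.mem_div_iff_forall_mul_mem] at hx
  obtain ⟨u, rfl⟩ := hu
  have aux (f : Module.Dual A I) (y : I) :
      algebraMap A Q (f y) = (↑u⁻¹ * algebraMap A Q (f ⟨u, huI⟩)) * y := by
    have := mul_apply_eq_mul_apply_of_isLocalization P (Algebra.linearMap A Q ∘ₗ f) ⟨u, huI⟩ y
    simp only [LinearMap.comp_apply, Algebra.linearMap_apply] at this
    rw [mul_assoc, mul_comm _ (y : Q), ← this, ← mul_assoc, Units.inv_mul, one_mul]
  have H (f : Module.Dual A I) :
      ∃ a, algebraMap A Q a = x * (↑u⁻¹ * algebraMap A Q (f ⟨u, huI⟩)) := by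
    refine Submodule.mem_one.mp (hx _ ?_)
    rw [Submodule.mem_div_iff_forall_mul_mem]
    exact fun y hy ↦ Submodule.mem_one.mpr ⟨_, aux f ⟨y, hy⟩⟩
  choose φ hφ using H
  let φ' : Module.Dual A (Module.Dual A I) :=
    { toFun := φ
      map_add' := fun a b ↦ hinj (by
        simp only [map_add, hφ, LinearMap.add_apply]; ring)
      map_smul' := fun a b ↦ hinj (by
        simp only [hφ, LinearMap.smul_apply, smul_eq_mul, map_mul, RingHom.id_apply]; ring) }
  obtain ⟨i, hi⟩ := (Module.bijective_dual_eval A I).2 φ'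
  rw [Submodule.mem_div_iff_forall_mul_mem] at hvI
  have hv' (y : I) : ∃ a, algebraMap A Q a = v * y := Submodule.mem_one.mp (hvI y y.2)
  choose g hg using hv'
  let g' : Module.Dual A I :=
    { toFun := g
      map_add' := fun a b ↦ hinj (by
        simp only [map_add, hg, Submodule.coe_add]; ring)
      map_smul' := fun a b ↦ hinj (by
        simp only [hg, smul_eq_mul, map_mul, RingHom.id_apply, Submodule.coe_smul,
          Algebra.smul_def]
        ring) }
  have h1 : g i = φ g' := LinearMap.congr_fun hi g'
  have h2 := congrArg (algebraMap A Q) h1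
  rw [hφ, hg] at h2
  change _ = x * (↑u⁻¹ * algebraMap A Q (g ⟨u, huI⟩)) at h2
  rw [hg, mul_left_comm _ v, Units.inv_mul, mul_one, mul_comm x] at h2
  rw [← hv.mul_left_cancel h2]
  exact i.2

end Fractions

section DimensionOne

variable {R S Q : Type*} [CommRing R] [CommRing S] [Algebra R S]


theorem Ideal.isMaximal_of_nonZeroDivisor_mem (hdim : ringKrullDim R = 1) {d : R}
    (hd : d ∈ nonZeroDivisors R) (p : Ideal R) [p.IsPrime] (hp : d ∈ p) : p.IsMaximal := by
  have h1 := ringKrullDim_quotient_succ_le_of_nonZeroDivisor hd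
  rw [hdim] at h1
  have h2 : Ring.KrullDimLE 0 (R ⧸ Ideal.span {d}) := by
    rw [Ring.krullDimLE_iff]
    rwa [← ENat.WithBot.add_le_add_one_right_iff, Nat.cast_zero, zero_add]
  have hker : RingHom.ker (Ideal.Quotient.mk (Ideal.span {d})) ≤ p := by
    rwa [Ideal.mk_ker, Ideal.span_singleton_le_iff_mem]
  have hs := Ideal.Quotient.mk_surjective (I := Ideal.span {d})
  have hmap : (p.map (Ideal.Quotient.mk (Ideal.span {d}))).IsPrime :=
    Ideal.map_isPrime_of_surjective hs hker
  have hmax := hmap.isMaximal'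
  have := Ideal.comap_isMaximal_of_surjective _ hs (K := p.map (Ideal.Quotient.mk (Ideal.span {d})))
  rwa [Ideal.comap_map_of_surjective' _ hs, sup_eq_left.mpr hker] at this

variable [IsNoetherianRing R] [Module.Finite R S]

/-- In a finite extension of a one-dimensional ring, a maximal ideal containing a nonzerodivisor of
the base kills an element modulo that nonzerodivisor. -/
theorem Ideal.IsMaximal.exists_notMem_span_singleton (hdim : ringKrullDim R = 1) {d : R}
    (hd : d ∈ nonZeroDivisors R) (n : Ideal S) [n.IsMaximal] (hn : algebraMap R S d ∈ n) :
    ∃ s ∉ Ideal.span {algebraMap R S d}, ∀ y ∈ n, y * s ∈ Ideal.span {algebraMap R S d} := by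
  have : IsNoetherianRing S := IsNoetherianRing.of_finite R S
  have hmin : n ∈ (Module.annihilator S (S ⧸ Ideal.span {algebraMap R S d})).minimalPrimes := by
    rw [Ideal.annihilator_quotient]
    refine ⟨⟨inferInstance, by rwa [Ideal.span_singleton_le_iff_mem]⟩, fun q hq hqn ↦ ?_⟩
    have := hq.1
    have hdq : d ∈ q.comap (algebraMap R S) := hq.2 (Ideal.mem_span_singleton_self _)
    have hmax := Ideal.isMaximal_of_nonZeroDivisor_mem hdim hd (q.comap (algebraMap R S)) hdq
    have := Ideal.isMaximal_of_isIntegral_of_isMaximal_comap q hmax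
    exact (this.eq_of_le (Ideal.IsPrime.ne_top inferInstance) hqn).ge
  have h := Module.associatedPrimes.minimalPrimes_annihilator_subset_associatedPrimes S _ hmin
  rw [AssociatedPrimes.mem_iff, isAssociatedPrime_iff] at h
  obtain ⟨-, x, hx⟩ := h
  obtain ⟨s, rfl⟩ := Ideal.Quotient.mk_surjective x
  have key (y : S) : y ∈ n ↔ y * s ∈ Ideal.span {algebraMap R S d} := by
    rw [hx, Submodule.mem_colon_singleton, Submodule.mem_bot, ← Ideal.Quotient.eq_zero_iff_mem]
    rfl
  refine ⟨s, fun hs ↦ ?_, fun y hy ↦ (key y).mp hy⟩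
  exact (Ideal.ne_top_iff_one n).mp (Ideal.IsPrime.ne_top inferInstance)
    ((key 1).mpr (by rwa [one_mul]))

/-- An ideal of a finite extension of a one-dimensional ring that has trivial inverse and contains a
nonzerodivisor of the base is the unit ideal. -/
theorem one_le_of_one_div_le_one (hdim : ringKrullDim R = 1) [CommRing Q] [Algebra R Q]
    [Algebra S Q] [IsScalarTower R S Q] [IsFractionRing R Q]
    (hinj : Function.Injective (algebraMap S Q)) {T : Submodule S Q} (hT : T ≤ 1)
    (hT' : 1 / T ≤ 1) {d : R} (hd : d ∈ nonZeroDivisors R) (hdT : algebraMap R Q d ∈ T) :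
    1 ≤ T := by
  let J : Ideal S := T.comap (Algebra.linearMap S Q)
  have hJ (x : S) : x ∈ J ↔ algebraMap S Q x ∈ T := Iff.rfl
  by_contra hcon
  have hne : J ≠ ⊤ := fun h ↦ hcon <| Submodule.one_le.mpr <| by
    rw [← map_one (algebraMap S Q), ← hJ, h]
    trivial
  obtain ⟨n, hn, hJn⟩ := Ideal.exists_le_maximal J hne
  have hdJ : algebraMap R S d ∈ J := by rwa [hJ, ← IsScalarTower.algebraMap_apply]
  obtain ⟨s, hs, hns⟩ := Ideal.IsMaximal.exists_notMem_span_singleton hdim hd n (hJn hdJ)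
  obtain ⟨u, hu⟩ := IsLocalization.map_units Q (⟨d, hd⟩ : nonZeroDivisors R)
  have hu' : (u : Q) = algebraMap S Q (algebraMap R S d) := by
    rw [hu, ← IsScalarTower.algebraMap_apply]
  have hmem : ↑u⁻¹ * algebraMap S Q s ∈ 1 / T := by
    rw [Submodule.mem_div_iff_forall_mul_mem]
    intro t ht
    obtain ⟨t, rfl⟩ := Submodule.mem_one.mp (hT ht)
    obtain ⟨c, hc⟩ := Ideal.mem_span_singleton.mp (hns t (hJn ht))
    refine Submodule.mem_one.mpr ⟨c, ?_⟩
    have := congrArg (algebraMap S Q) hc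
    rw [map_mul, map_mul, ← hu'] at this
    rw [mul_assoc, mul_comm _ (algebraMap S Q t), this, Units.inv_mul_cancel_left]
  obtain ⟨c, hc⟩ := Submodule.mem_one.mp (hT' hmem)
  refine hs (Ideal.mem_span_singleton.mpr ⟨c, hinj ?_⟩)
  rw [map_mul, ← hu', hc, Units.mul_inv_cancel_left]

end DimensionOne

theorem finite_setOf_isMaximal_of_isLocalRing {R S : Type*} [CommRing R] [CommRing S]
    [Algebra R S] [Module.Finite R S] [IsLocalRing R] :
    {n : Ideal S | n.IsMaximal}.Finite := by
  refine (Algebra.QuasiFinite.finite_primesOver (S := S) (IsLocalRing.maximalIdeal R)).subset ?_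
  intro n hn
  have : n.IsMaximal := hn
  exact ⟨inferInstance, ⟨(IsLocalRing.eq_maximalIdeal
    (Ideal.isMaximal_comap_of_isIntegral_of_isMaximal (R := R) n)).symm⟩⟩

section Conductor

variable {R Q : Type*} [CommRing R] [CommRing Q] [Algebra R Q]

/-- The conductor of a subalgebra of the total ring of fractions, as a module over the
subalgebra. -/
def conductorOver (S : Subalgebra R Q) : Submodule S Q where
  __ := ((1 : Submodule R Q) / Subalgebra.toSubmodule S).toAddSubmonoid
  smul_mem' s x hx := by
    refine Submodule.mem_div_iff_forall_mul_mem.mpr fun y hy ↦ ?_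
    rw [Subalgebra.smul_def, smul_eq_mul, mul_comm _ x, mul_assoc]
    exact Submodule.mem_div_iff_forall_mul_mem.mp hx _ (S.mul_mem s.2 hy)

variable {S : Subalgebra R Q}

theorem mem_conductorOver {x : Q} :
    x ∈ conductorOver S ↔ x ∈ (1 : Submodule R Q) / Subalgebra.toSubmodule S := Iff.rfl

theorem mul_mem_conductor {x s : Q} (hx : x ∈ (1 : Submodule R Q) / Subalgebra.toSubmodule S)
    (hs : s ∈ S) : s * x ∈ (1 : Submodule R Q) / Subalgebra.toSubmodule S :=
  (conductorOver S).smul_mem (⟨s, hs⟩ : S) hx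

theorem mem_one_of_mem_conductor {x : Q}
    (hx : x ∈ (1 : Submodule R Q) / Subalgebra.toSubmodule S) : x ∈ (1 : Submodule R Q) := by
  simpa using Submodule.mem_div_iff_forall_mul_mem.mp hx 1 S.one_mem

variable [IsFractionRing R Q]

theorem exists_nonZeroDivisor_mem_conductor [Module.Finite R S] :
    ∃ d ∈ nonZeroDivisors R,
      algebraMap R Q d ∈ (1 : Submodule R Q) / Subalgebra.toSubmodule S := by
  have hfg : (Subalgebra.toSubmodule S).FG := Module.Finite.iff_fg.mp ‹_›
  obtain ⟨d, hd, h⟩ := FractionalIdeal.isFractional_of_fg (S := nonZeroDivisors R) hfg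
  refine ⟨d, hd, Submodule.mem_div_iff_forall_mul_mem.mpr fun y hy ↦ ?_⟩
  obtain ⟨r, hr⟩ := h y hy
  exact Submodule.mem_one.mpr ⟨r, by rw [hr, Algebra.smul_def]⟩

theorem one_div_conductor_le [Module.Finite R S] [Module.IsReflexive R S] {x : Q}
    (hx : ∀ y ∈ (1 : Submodule R Q) / Subalgebra.toSubmodule S, x * y ∈ (1 : Submodule R Q)) :
    x ∈ S := by
  obtain ⟨d, hd, hdc⟩ := exists_nonZeroDivisor_mem_conductor (S := S)
  have : Module.IsReflexive R (Subalgebra.toSubmodule S) := ‹Module.IsReflexive R S›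
  exact one_div_one_div_le_of_isReflexive (nonZeroDivisors R) (IsFractionRing.injective R Q)
    (Subalgebra.toSubmodule S) isUnit_one S.one_mem
    (IsLocalization.map_units Q (⟨d, hd⟩ : nonZeroDivisors R)) hdc
    (Submodule.mem_div_iff_forall_mul_mem.mpr hx)

/-- The functionals on `S` are given by multiplication with elements of the conductor. -/
theorem exists_conductorOver_equiv_dual (S : Subalgebra R Q) :
    ∃ e : conductorOver S ≃ₗ[R] Module.Dual R S, ∀ c s, algebraMap R Q (e c s) = c * s := by
  have H (c : conductorOver S) (s : S) : ∃ r, algebraMap R Q r = c * s :=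
    Submodule.mem_one.mp
      (Submodule.mem_div_iff_forall_mul_mem.mp (mem_conductorOver.mp c.2) s s.2)
  choose f hf using H
  have inj := IsFractionRing.injective R Q
  let F : conductorOver S →ₗ[R] Module.Dual R S :=
    { toFun := fun c ↦
        { toFun := f c
          map_add' := fun s s' ↦ inj (by simp [hf, mul_add])
          map_smul' := fun r s ↦ inj (by simp [hf, Algebra.smul_def, mul_left_comm]) }
      map_add' := fun c c' ↦ by
        ext s
        exact inj (by simp [hf, add_mul])
      map_smul' := fun r c ↦ by
        ext s
        exact inj (by simp [hf, Algebra.smul_def, mul_assoc]) }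
  refine ⟨LinearEquiv.ofBijective F ⟨fun c c' h ↦ ?_, fun g ↦ ?_⟩, hf⟩
  · have h1 : f c 1 = f c' 1 := LinearMap.congr_fun h 1
    have h2 := congrArg (algebraMap R Q) h1
    rw [hf, hf] at h2
    ext
    simpa using h2
  · have key (s : S) : algebraMap R Q (g s) = algebraMap R Q (g 1) * s := by
      have := mul_apply_eq_mul_apply_of_isLocalization (nonZeroDivisors R)
        (I := Subalgebra.toSubmodule S) (Algebra.linearMap R Q ∘ₗ g) (1 : S) s
      rw [mul_comm _ (s : Q)]
      simpa using this
    refine ⟨⟨algebraMap R Q (g 1), mem_conductorOver.mpr <|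
      Submodule.mem_div_iff_forall_mul_mem.mpr fun s hs ↦ Submodule.mem_one.mpr ⟨g ⟨s, hs⟩, key ⟨s, hs⟩⟩⟩, ?_⟩
    ext s
    exact inj ((hf _ _).trans (key s).symm)

/-- If `S` is reflexive, it is the endomorphism ring of its conductor. -/
noncomputable def endConductorEquiv [Module.Finite R S] [Module.IsReflexive R S] :
    S ≃ₗ[R] (((1 : Submodule R Q) / Subalgebra.toSubmodule S : Submodule R Q) →ₗ[R]
      ((1 : Submodule R Q) / Subalgebra.toSubmodule S : Submodule R Q)) := by
  refine LinearEquiv.ofBijective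
    { toFun := fun s : S ↦ ((LinearMap.mulLeft R (s : Q)).restrict
        fun x hx ↦ mul_mem_conductor hx s.2)
      map_add' := fun s s' ↦ LinearMap.ext fun x ↦ Subtype.ext (add_mul _ _ _)
      map_smul' := fun r s ↦ LinearMap.ext fun x ↦ Subtype.ext (smul_mul_assoc _ _ _) } ⟨fun s s' h ↦ ?_, fun f ↦ ?_⟩
  · obtain ⟨d, hd, hdc⟩ := exists_nonZeroDivisor_mem_conductor (S := S)
    have h1 := congrArg Subtype.val (LinearMap.congr_fun h ⟨_, hdc⟩)
    exact Subtype.ext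
      ((IsLocalization.map_units Q (⟨d, hd⟩ : nonZeroDivisors R)).mul_right_cancel h1)
  · obtain ⟨d, hd, hdc⟩ := exists_nonZeroDivisor_mem_conductor (S := S)
    obtain ⟨u, hu⟩ := IsLocalization.map_units Q (⟨d, hd⟩ : nonZeroDivisors R)
    dsimp only at hu
    have key (y : ((1 : Submodule R Q) / Subalgebra.toSubmodule S : Submodule R Q)) :
        ↑u⁻¹ * (f ⟨_, hdc⟩ : Q) * y = f y := by
      have := mul_apply_eq_mul_apply_of_isLocalization (nonZeroDivisors R)
        (Submodule.subtype _ ∘ₗ f) ⟨_, hdc⟩ y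
      simp only [LinearMap.comp_apply, Submodule.subtype_apply, ← hu] at this
      rw [mul_assoc, mul_comm _ (y : Q), Units.inv_mul_eq_iff_eq_mul]
      simp only [this, ← hu]
    refine ⟨⟨↑u⁻¹ * (f ⟨_, hdc⟩ : Q), one_div_conductor_le fun y hy ↦ ?_⟩, ?_⟩
    · rw [key ⟨y, hy⟩]
      exact mem_one_of_mem_conductor (f ⟨y, hy⟩).2
    · ext y
      exact key y

/-- The conductor of a reflexive extension is stable iff it is free of rank one. -/
theorem nonempty_conductor_equiv_end_iff [Module.Finite R S] [Module.IsReflexive R S] :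
    Nonempty (((1 : Submodule R Q) / Subalgebra.toSubmodule S : Submodule R Q) ≃ₗ[R]
      (((1 : Submodule R Q) / Subalgebra.toSubmodule S : Submodule R Q) →ₗ[R]
        ((1 : Submodule R Q) / Subalgebra.toSubmodule S : Submodule R Q))) ↔
      ∃ a ∈ (1 : Submodule R Q) / Subalgebra.toSubmodule S,
        (∀ y ∈ (1 : Submodule R Q) / Subalgebra.toSubmodule S, ∃ s ∈ S, y = s * a) ∧
          ∀ s ∈ S, s * a = 0 → s = 0 := by
  constructor
  · rintro ⟨e⟩
    let g : S ≃ₗ[R] ((1 : Submodule R Q) / Subalgebra.toSubmodule S : Submodule R Q) :=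
      endConductorEquiv.trans e.symm
    have key (s : S) : (g s : Q) = s * g 1 := by
      have := mul_apply_eq_mul_apply_of_isLocalization (nonZeroDivisors R)
        (I := Subalgebra.toSubmodule S) (Submodule.subtype _ ∘ₗ g.toLinearMap) (1 : S) s
      simpa using this
    refine ⟨g 1, (g 1).2, fun y hy ↦ ?_, fun s hs h ↦ ?_⟩
    · refine ⟨g.symm ⟨y, hy⟩, (g.symm ⟨y, hy⟩).2, ?_⟩
      rw [← key, LinearEquiv.apply_symm_apply]
    · have h0 : g ⟨s, hs⟩ = 0 := by
        ext
        rw [key]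
        exact h
      exact congrArg Subtype.val (g.map_eq_zero_iff.mp h0)
  · rintro ⟨a, ha, hsurj, hinj⟩
    refine ⟨(LinearEquiv.ofBijective (LinearMap.codRestrict _
      (LinearMap.mulRight R a ∘ₗ (Subalgebra.toSubmodule S).subtype)
      fun s ↦ mul_mem_conductor ha s.2) ⟨?_, ?_⟩).symm.trans endConductorEquiv⟩
    · rw [injective_iff_map_eq_zero]
      exact fun s hs ↦ Subtype.ext (hinj s s.2 (congrArg Subtype.val hs))
    · rintro ⟨y, hy⟩
      obtain ⟨s, hs, rfl⟩ := hsurj y hy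
      exact ⟨⟨s, hs⟩, rfl⟩

/-- Over an extension whose conductor is free of rank one, reflexivity can be tested over the
base. -/
theorem isReflexive_iff_of_conductor_generator {a : Q}
    (ha : a ∈ (1 : Submodule R Q) / Subalgebra.toSubmodule S)
    (hsurj : ∀ y ∈ (1 : Submodule R Q) / Subalgebra.toSubmodule S, ∃ s ∈ S, y = s * a)
    (hinj : ∀ s ∈ S, s * a = 0 → s = 0)
    (M : Type*) [AddCommGroup M] [Module R M] [Module S M] [IsScalarTower R S M] :
    Module.IsReflexive S M ↔ Module.IsReflexive R M := by
  obtain ⟨e, H⟩ := exists_conductorOver_equiv_dual S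
  refine isReflexive_iff_of_generator (t := e ⟨a, ha⟩) (fun f ↦ ?_)
    (fun s hs ↦ ?_) M
  · obtain ⟨⟨c, hc⟩, rfl⟩ := e.surjective f
    obtain ⟨s, hs, rfl⟩ := hsurj c hc
    refine ⟨⟨s, hs⟩, fun x ↦ IsFractionRing.injective R Q ?_⟩
    rw [H, H]
    simp only [MulMemClass.coe_mul]
    ring
  · have := congrArg (algebraMap R Q) (hs 1)
    rw [H, map_zero, mul_one, mul_comm] at this
    exact Subtype.ext (hinj s s.2 this)

end Conductor

section Main

variable {R Q : Type*} [CommRing R] [CommRing Q] [Algebra R Q] [IsFractionRing R Q]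
  {S : Subalgebra R Q}

instance isLocalization_algebraMapSubmonoid_subalgebra :
    IsLocalization (Algebra.algebraMapSubmonoid S (nonZeroDivisors R)) Q where
  map_units := by
    rintro ⟨_, d, hd, rfl⟩
    exact IsLocalization.map_units Q (⟨d, hd⟩ : nonZeroDivisors R)
  surj z := by
    obtain ⟨⟨r, d⟩, h⟩ := IsLocalization.surj (nonZeroDivisors R) z
    exact ⟨⟨algebraMap R S r, ⟨algebraMap R S d, d, d.2, rfl⟩⟩, h⟩
  exists_of_eq h := ⟨1, by rw [Subtype.ext h]⟩

theorem algebraMapSubmonoid_le_nonZeroDivisors_subalgebra :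
    Algebra.algebraMapSubmonoid S (nonZeroDivisors R) ≤ nonZeroDivisors S := by
  rintro _ ⟨d, hd, rfl⟩
  rw [mem_nonZeroDivisors_iff_right]
  intro x hx
  have h1 : (x : Q) * algebraMap R Q d = 0 := congrArg Subtype.val hx
  exact Subtype.ext
    ((IsLocalization.map_units Q (⟨d, hd⟩ : nonZeroDivisors R)).mul_left_eq_zero.mp h1)

theorem isTorsionFreeModule_submodule (I : Submodule S Q) : IsTorsionFreeModule S I := by
  intro a ha m hm
  have h1 := congrArg Subtype.val hm
  have h2 : (a : Q) * m = 0 := h1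
  obtain ⟨⟨r, d⟩, h⟩ := IsLocalization.surj (nonZeroDivisors R) (m : Q)
  have h3 : algebraMap R S r = 0 := by
    refine (mem_nonZeroDivisors_iff_right.mp ha) _ (Subtype.ext ?_)
    change algebraMap R Q r * (a : Q) = 0
    rw [← h, mul_right_comm, mul_comm (m : Q), h2, zero_mul]
  have h4 : algebraMap R Q r = 0 := congrArg Subtype.val h3
  rw [h4] at h
  exact Subtype.ext ((IsLocalization.map_units Q d).mul_left_eq_zero.mp h)

theorem isTorsionFreeModule_self (A : Type*) [CommRing A] : IsTorsionFreeModule A A :=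
  fun _ ha _ h ↦ (mem_nonZeroDivisors_iff_left.mp ha) _ h

theorem Module.IsReflexive.isTorsionFreeModule {A M : Type*} [CommRing A] [AddCommGroup M]
    [Module A M] (h : Module.IsReflexive A M) : IsTorsionFreeModule A M := by
  intro a ha m hm
  refine (Module.bijective_dual_eval A M).1 ?_
  ext f
  rw [map_zero, LinearMap.zero_apply]
  refine isTorsionFreeModule_self A a ha _ ?_
  rw [Module.Dual.eval_apply, ← map_smul, hm, map_zero]

/-- If the conductor is reflexive over `S`, then it is invertible, hence free of rank one. -/
theorem exists_conductor_generator [IsNoetherianRing R] [IsLocalRing R]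
    (hdim : ringKrullDim R = 1) [Module.Finite R S] [Module.IsReflexive R S]
    [Module.IsReflexive S (conductorOver S)] :
    ∃ a ∈ (1 : Submodule R Q) / Subalgebra.toSubmodule S,
      (∀ y ∈ (1 : Submodule R Q) / Subalgebra.toSubmodule S, ∃ s ∈ S, y = s * a) ∧
        ∀ s ∈ S, s * a = 0 → s = 0 := by
  obtain ⟨d, hd, hdc⟩ := exists_nonZeroDivisor_mem_conductor (S := S)
  have hud : IsUnit (algebraMap R Q d) :=
    IsLocalization.map_units Q (⟨d, hd⟩ : nonZeroDivisors R)
  have hinj : Function.Injective (algebraMap S Q) := Subtype.val_injective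
  have hle : conductorOver S ≤ 1 := fun x hx ↦ by
    obtain ⟨r, rfl⟩ := Submodule.mem_one.mp (mem_one_of_mem_conductor (mem_conductorOver.mp hx))
    exact Submodule.mem_one.mpr ⟨algebraMap R S r, rfl⟩
  have hone : (1 : Q) ∈ 1 / conductorOver S := Submodule.one_mem_div.mpr hle
  have hdiv : 1 / (1 / conductorOver S) ≤ conductorOver S :=
    one_div_one_div_le_of_isReflexive (Algebra.algebraMapSubmonoid S (nonZeroDivisors R)) hinj
      (conductorOver S) hud hdc isUnit_one hone
  have hT : 1 ≤ conductorOver S * (1 / conductorOver S) := by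
    refine one_le_of_one_div_le_one (R := R) hdim hinj Submodule.mul_one_div_le_one ?_ hd
      (by simpa using Submodule.mul_mem_mul (mem_conductorOver.mpr hdc) hone)
    intro x hx
    rw [Submodule.mem_div_iff_forall_mul_mem] at hx
    refine Submodule.mem_one.mpr ⟨⟨x, one_div_conductor_le fun y hy ↦ ?_⟩, rfl⟩
    refine mem_one_of_mem_conductor (mem_conductorOver.mp (hdiv ?_))
    refine Submodule.mem_div_iff_forall_mul_mem.mpr fun j hj ↦ ?_
    rw [mul_assoc]
    exact hx _ (Submodule.mul_mem_mul (mem_conductorOver.mpr hy) hj)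
  have hmul := le_antisymm Submodule.mul_one_div_le_one hT
  let P := Algebra.algebraMapSubmonoid S (nonZeroDivisors R)
  let I : FractionalIdeal P Q := ⟨conductorOver S, FractionalIdeal.isFractional_of_le_one _ hle⟩
  let J : FractionalIdeal P Q := ⟨1 / conductorOver S, algebraMap R S d, ⟨d, hd, rfl⟩,
    fun j hj ↦ by
      have := Submodule.mem_div_iff_forall_mul_mem.mp hj _ (mem_conductorOver.mpr hdc)
      obtain ⟨s, hs⟩ := Submodule.mem_one.mp this
      exact ⟨s, by rw [hs, mul_comm]; rfl⟩⟩
  obtain ⟨a, ha⟩ := FractionalIdeal.isPrincipal.of_finite_maximals_of_inv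
    algebraMapSubmonoid_le_nonZeroDivisors_subalgebra (finite_setOf_isMaximal_of_isLocalRing (R := R)) I J
    (by
      apply FractionalIdeal.coeToSubmodule_injective
      exact (FractionalIdeal.coe_mul I J).trans (hmul.trans FractionalIdeal.coe_one.symm))
  have ha' : conductorOver S = Submodule.span S {a} := ha
  have hgen (y : Q) (hy : y ∈ (1 : Submodule R Q) / Subalgebra.toSubmodule S) :
      ∃ s ∈ S, y = s * a := by
    have hy' := mem_conductorOver.mpr hy
    rw [ha'] at hy'
    obtain ⟨s, rfl⟩ := Submodule.mem_span_singleton.mp hy'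
    exact ⟨s, s.2, rfl⟩
  refine ⟨a, mem_conductorOver.mp (ha' ▸ Submodule.mem_span_singleton_self a), hgen,
    fun s _ h ↦ ?_⟩
  obtain ⟨t, -, ht⟩ := hgen _ hdc
  refine hud.mul_left_eq_zero.mp ?_
  rw [ht, mul_left_comm, h, mul_zero]

end Main

/-- `S` is a reflexive `R`-module with stable conductor iff
`refl(S) = CM(S) ∩ refl(R)`, i.e. a finitely generated `S`-module is reflexive over `S`
exactly when it is torsion-free over `S` and reflexive over `R`. -/
theorem reflexive_and_conductor_stable_iff_refl_eq (R : Type u) [CommRing R]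
    (hCM : IsCohenMacaulayLocalRing R) (hdim : ringKrullDim R = 1)
    (hGG : IsGenericallyGorenstein R)
    (S : Subalgebra R (FractionRing R)) (hfin : Module.Finite R S) :
    (Module.IsReflexive R S ∧
      Nonempty ((↥(conductorFrac R S)) ≃ₗ[R]
        ((↥(conductorFrac R S)) →ₗ[R] (↥(conductorFrac R S))))) ↔
      ∀ (M : Type u) [AddCommGroup M] [Module R M] [Module S M] [IsScalarTower R S M],
        Module.Finite S M →
          (Module.IsReflexive S M ↔ (IsTorsionFreeModule S M ∧ Module.IsReflexive R M)) := by
  have := hCM.1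
  obtain ⟨_, -⟩ := hCM.2
  constructor
  · rintro ⟨_, h⟩ M _ _ _ _ _
    obtain ⟨a, ha, hsurj, hinj⟩ := nonempty_conductor_equiv_end_iff.mp h
    have hiff := isReflexive_iff_of_conductor_generator ha hsurj hinj M
    exact ⟨fun hM ↦ ⟨hM.isTorsionFreeModule, hiff.mp hM⟩, fun hM ↦ hiff.mpr hM.2⟩
  · intro h
    have hS : Module.IsReflexive R S := ((h S inferInstance).mp inferInstance).2
    have : IsNoetherian R S := isNoetherian_of_isNoetherianRing_of_finite R S
    obtain ⟨e, -⟩ := exists_conductorOver_equiv_dual S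
    have hR : Module.IsReflexive R (conductorOver S) := Module.equiv e.symm
    have : Module.Finite R (conductorOver S) := Module.Finite.equiv e.symm
    have hc : Module.IsReflexive S (conductorOver S) :=
      (h (conductorOver S) (Module.Finite.of_restrictScalars_finite R S _)).mpr
        ⟨isTorsionFreeModule_submodule _, hR⟩
    exact ⟨hS, nonempty_conductor_equiv_end_iff.mpr (exists_conductor_generator hdim)⟩
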